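/- Let f be a Holland map in Hol(γ,ρ) with γ < 1 and p = 1/γ, so that the Lebesgue measure of J_n satisfies λ(J_n) = O(n^{−p−1} s(n)) with s slowly varying at infinity. Then the operators Λ_n act boundedly on BV and their operator norms satisfy ‖Λ_n‖_{L(BV)} = O(n^{−p−1} s(n)). -/

import Mathlib

open MeasureTheory Filter Set Topology

def SlowlyVarying (s : ℝ → ℝ) : Prop :=
  ∀ l : ℝ, 0 < l → Tendsto (fun x => s (l * x) / s x) atTop (nhds 1)

structure IsHolland (γ : ℝ) (ρ : ℝ → ℝ) (f : ℝ → ℝ) : Prop where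
  gamma_pos : 0 < γ
  rho_pos : ∀ x ∈ Set.Ioo (0:ℝ) 1, 0 < ρ x
  maps_to : ∀ x ∈ Set.Icc (0:ℝ) 1, f x ∈ Set.Icc (0:ℝ) 1
  eq_left : ∀ x ∈ Set.Icc (0:ℝ) (1/2), f x = x * (1 + x ^ γ * ρ x)
  eq_right : ∀ x ∈ Set.Ioc (1/2:ℝ) 1, f x = 2 * x - 1
  smooth : ContDiffOn ℝ 2 ρ (Set.Ioo 0 1)
  slowly_zero : ∀ l : ℝ, 0 < l →
    Tendsto (fun x => ρ (l * x) / ρ x) (nhdsWithin 0 (Set.Ioi 0)) (nhds 1)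
  deriv_small : Tendsto (fun x => x * deriv ρ x / ρ x) (nhdsWithin 0 (Set.Ioi 0)) (nhds 0)
  deriv2_small : Tendsto (fun x => x ^ 2 * deriv (deriv ρ) x / ρ x)
    (nhdsWithin 0 (Set.Ioi 0)) (nhds 0)
  rho_zero : Tendsto ρ (nhdsWithin 0 (Set.Ioi 0)) (nhds 0)
  half : f (1/2) = 1
  expanding : ∀ x ∈ Set.Ioo (0:ℝ) 1, x ≠ 1/2 → 1 < deriv f x

noncomputable def RY (f : ℝ → ℝ) (x : ℝ) : ℕ :=
  sInf {n : ℕ | 1 ≤ n ∧ f^[n] x ∈ Set.Ioc (1/2:ℝ) 1}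

noncomputable def Kop (h v0 v1 : ℝ → ℝ) (φ : ℝ → ℝ) : ℝ → ℝ := fun x =>
  (1 / h x) * (h (v0 x) * |deriv v0 x| * φ (v0 x) + h (v1 x) * |deriv v1 x| * φ (v1 x))

noncomputable def Aop (h v0 v1 : ℝ → ℝ) (n : ℕ) (φ : ℝ → ℝ) : ℝ → ℝ :=
  Set.indicator (Set.Icc (0:ℝ) (1/2)) (fun y =>
    h (v1 (v0^[n-1] y)) * |deriv (fun w => v1 (v0^[n-1] w)) y| / h y * φ (v1 (v0^[n-1] y)))

noncomputable def Bop (h v0 : ℝ → ℝ) (n : ℕ) (φ : ℝ → ℝ) : ℝ → ℝ :=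
  Set.indicator (Set.Ioc (1/2:ℝ) 1) (fun y =>
    h (v0^[n] y) * |deriv (v0^[n]) y| / h y * φ (v0^[n] y))

noncomputable def Cop (h v0 : ℝ → ℝ) (n : ℕ) (φ : ℝ → ℝ) : ℝ → ℝ :=
  Set.indicator (Set.Icc (0:ℝ) (1/2)) (fun y =>
    h (v0^[n] y) * |deriv (v0^[n]) y| / h y * φ (v0^[n] y))

noncomputable def Lop (h v0 v1 : ℝ → ℝ) (n : ℕ) (φ : ℝ → ℝ) : ℝ → ℝ :=
  Set.indicator (Set.Ioc (1/2:ℝ) 1) (fun y =>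
    h (v1 (v0^[n-1] y)) * |deriv (fun w => v1 (v0^[n-1] w)) y| / h y * φ (v1 (v0^[n-1] y)))

noncomputable def LopC (h v0 v1 : ℝ → ℝ) (n : ℕ) (φ : ℝ → ℂ) : ℝ → ℂ :=
  Set.indicator (Set.Ioc (1/2:ℝ) 1) (fun y =>
    ((h (v1 (v0^[n-1] y)) * |deriv (fun w => v1 (v0^[n-1] w)) y| / h y : ℝ) : ℂ)
      * φ (v1 (v0^[n-1] y)))

noncomputable def nestedK (K : (ℝ → ℝ) → (ℝ → ℝ)) :
    (j : ℕ) → (Fin j → ℕ) → (Fin j → (ℝ → ℝ)) → (ℝ → ℝ)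
  | 0, _, _ => fun _ => 1
  | j + 1, ns, φs =>
      K^[ns 0] (fun y => φs 0 y * nestedK K j (fun i => ns i.succ) (fun i => φs i.succ) y)

lemma aux_bdd (q : ℝ → ℝ) (hc : ContinuousOn q (Set.Ioo 0 1))
    (ht : Tendsto q (nhdsWithin 0 (Set.Ioi 0)) (nhds 0)) :
    ∃ B : ℝ, 0 ≤ B ∧ ∀ x ∈ Set.Ioc (0:ℝ) (1/2), |q x| ≤ B := by
  have h1 : ∀ᶠ x in nhdsWithin (0:ℝ) (Set.Ioi 0), |q x| < 1 := by
    have := (Metric.tendsto_nhds.1 ht) 1 one_pos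
    simpa [Real.dist_eq] using this
  obtain ⟨d, hd, hd1⟩ := (mem_nhdsGT_iff_exists_Ioo_subset).1 h1
  have hd : 0 < d := hd
  obtain ⟨B, hB⟩ := (isCompact_Icc (a := min d (1/2)) (b := (1/2:ℝ))).exists_bound_of_continuousOn
    (f := q) (hc.mono (fun x hx => ⟨lt_of_lt_of_le (by positivity) hx.1, by linarith [hx.2]⟩))
  refine ⟨max B 1, by positivity, fun x hx => ?_⟩
  by_cases hxd : x < d
  · exact le_max_of_le_right (le_of_lt (hd1 ⟨hx.1, hxd⟩))
  · exact le_max_of_le_left (hB x ⟨min_le_of_left_le (not_lt.1 hxd), hx.2⟩)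

lemma aux_log (γ : ℝ) (ρ f : ℝ → ℝ) (hf : IsHolland γ ρ f) :
    ∃ A : ℝ, 0 ≤ A ∧ ∀ x ∈ Set.Ioo (0:ℝ) (1/2), ∀ y ∈ Set.Ioo (0:ℝ) (1/2), y ≤ x →
      |Real.log (deriv f x) - Real.log (deriv f y)| ≤ A * (x ^ γ - y ^ γ) := by
  have hγ := hf.gamma_pos
  have hsm := hf.smooth
  have h2 : ContDiffOn ℝ (1 + 1) ρ (Set.Ioo 0 1) := by
    convert hsm using 1; norm_num
  rw [contDiffOn_succ_iff_deriv_of_isOpen isOpen_Ioo] at h2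
  obtain ⟨hd1, -, hc1⟩ := h2
  have h3 : ContDiffOn ℝ (0 + 1) (deriv ρ) (Set.Ioo 0 1) := by simpa using hc1
  rw [contDiffOn_succ_iff_deriv_of_isOpen isOpen_Ioo] at h3
  obtain ⟨hd2, -, hc2⟩ := h3
  have hc2 := hc2.continuousOn
  have hpos : ∀ᶠ x in nhdsWithin (0:ℝ) (Set.Ioi 0), 0 < ρ x := by
    filter_upwards [Ioo_mem_nhdsGT (zero_lt_one (α := ℝ))] with x hx using hf.rho_pos x hx
  obtain ⟨B0, hB0, hB0'⟩ := aux_bdd ρ hd1.continuousOn hf.rho_zero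
  obtain ⟨B1, hB1, hB1'⟩ := aux_bdd (fun x => x * deriv ρ x)
    (continuousOn_id.mul hd2.continuousOn) (by
      have := hf.deriv_small.mul hf.rho_zero
      rw [zero_mul] at this
      refine this.congr' ?_
      filter_upwards [hpos] with x hx
      field_simp)
  obtain ⟨B2, hB2, hB2'⟩ := aux_bdd (fun x => x ^ 2 * deriv (deriv ρ) x)
    ((continuousOn_id.pow 2).mul hc2) (by
      have := hf.deriv2_small.mul hf.rho_zero
      rw [zero_mul] at this
      refine this.congr' ?_
      filter_upwards [hpos] with x hx
      field_simp)
  set F : ℝ → ℝ := fun x => 1 + (1 + γ) * (x ^ γ * ρ x) + x ^ γ * (x * deriv ρ x) with hF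
  have hF1 : ∀ x ∈ Set.Ioo (0:ℝ) (1/2), deriv f x = F x := by
    intro x hx
    have e : f =ᶠ[nhds x] fun x => x * (1 + x ^ γ * ρ x) := by
      filter_upwards [Ioo_mem_nhds hx.1 hx.2] with y hy using hf.eq_left y ⟨hy.1.le, hy.2.le⟩
    rw [e.deriv_eq]
    have hr : HasDerivAt ρ (deriv ρ x) x :=
      (hd1.differentiableAt (Ioo_mem_nhds hx.1 (by linarith [hx.2]))).hasDerivAt
    have hp : HasDerivAt (fun x : ℝ => x ^ γ) (γ * x ^ (γ - 1)) x :=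
      Real.hasDerivAt_rpow_const (Or.inl hx.1.ne')
    have := (hasDerivAt_id x).mul ((hp.mul hr).const_add 1)
    have this2 : HasDerivAt (fun x => x * (1 + x ^ γ * ρ x)) _ x := this
    rw [this2.deriv, hF]
    simp only [id, Pi.mul_apply]
    have : x ^ γ = x ^ (γ - 1) * x := by
      rw [Real.rpow_sub_one hx.1.ne']; field_simp [hx.1.ne']
    rw [this]; ring
  have hF2 : ∀ x ∈ Set.Ioo (0:ℝ) (1/2), ∃ F', HasDerivAt F F' x ∧
      |F'| ≤ ((1+γ)*γ*B0 + 2*(1+γ)*B1 + B1 + B2) * x ^ (γ - 1) := by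
    intro x hx
    have hr : HasDerivAt ρ (deriv ρ x) x :=
      (hd1.differentiableAt (Ioo_mem_nhds hx.1 (by linarith [hx.2]))).hasDerivAt
    have hr2 : HasDerivAt (deriv ρ) (deriv (deriv ρ) x) x :=
      (hd2.differentiableAt (Ioo_mem_nhds hx.1 (by linarith [hx.2]))).hasDerivAt
    have hp : HasDerivAt (fun x : ℝ => x ^ γ) (γ * x ^ (γ - 1)) x :=
      Real.hasDerivAt_rpow_const (Or.inl hx.1.ne')
    have := (((hp.mul hr).const_mul (1+γ)).const_add 1).add (hp.mul ((hasDerivAt_id x).mul hr2))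
    refine ⟨_, this, ?_⟩
    simp only [id, Pi.mul_apply]
    have hxx : x ^ γ = x ^ (γ - 1) * x := by
      rw [Real.rpow_sub_one hx.1.ne']; field_simp [hx.1.ne']
    have hx' : x ∈ Set.Ioc (0:ℝ) (1/2) := ⟨hx.1, hx.2.le⟩
    have b0 := abs_le.1 (hB0' x hx')
    have b1 := abs_le.1 (hB1' x hx')
    have b2 := abs_le.1 (hB2' x hx')
    have hxp : 0 < x ^ (γ - 1) := Real.rpow_pos_of_pos hx.1 _
    rw [hxx, show (1 + γ) * (γ * x ^ (γ - 1) * ρ x + x ^ (γ - 1) * x * deriv ρ x) +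
      (γ * x ^ (γ - 1) * (x * deriv ρ x) + x ^ (γ - 1) * x * (1 * deriv ρ x + x * deriv (deriv ρ) x))
      = ((1+γ)*γ*ρ x + 2*(1+γ)*(x * deriv ρ x) + x^2 * deriv (deriv ρ) x) * x ^ (γ - 1) by ring,
      abs_mul, abs_of_pos hxp]
    gcongr
    have c1 : 0 ≤ (1+γ)*γ := by positivity
    have c2 : 0 ≤ 2*(1+γ) := by positivity
    rw [abs_le]
    constructor
    · linarith [mul_le_mul_of_nonneg_left b0.1 c1, mul_le_mul_of_nonneg_left b1.1 c2]
    · linarith [mul_le_mul_of_nonneg_left b0.2 c1, mul_le_mul_of_nonneg_left b1.2 c2]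
  set A' := ((1+γ)*γ*B0 + 2*(1+γ)*B1 + B1 + B2) with hA'
  have hA0 : 0 ≤ A' := by positivity
  have hFgt : ∀ x ∈ Set.Ioo (0:ℝ) (1/2), 1 < F x := fun x hx => by
    rw [← hF1 x hx]; exact hf.expanding x ⟨hx.1, by linarith [hx.2]⟩ hx.2.ne
  have key : ∀ σ : ℝ, |σ| = 1 → MonotoneOn (fun x => A' / γ * x ^ γ + σ * Real.log (F x))
      (Set.Ioo (0:ℝ) (1/2)) := by
    intro σ hσ
    have hder : ∀ x ∈ Set.Ioo (0:ℝ) (1/2), ∃ d, 0 ≤ d ∧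
        HasDerivAt (fun x => A' / γ * x ^ γ + σ * Real.log (F x)) d x := by
      intro x hx
      obtain ⟨F', hF', hb⟩ := hF2 x hx
      have hp : HasDerivAt (fun x : ℝ => x ^ γ) (γ * x ^ (γ - 1)) x :=
        Real.hasDerivAt_rpow_const (Or.inl hx.1.ne')
      have g1 := hFgt x hx
      refine ⟨_, ?_, (hp.const_mul (A' / γ)).add ((hF'.log (by linarith)).const_mul σ)⟩
      have e1 : A' / γ * (γ * x ^ (γ - 1)) = A' * x ^ (γ - 1) := by field_simp
      have e2 : |σ * (F' / F x)| ≤ |F'| := by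
        rw [abs_mul, hσ, one_mul, abs_div, abs_of_pos (by linarith : 0 < F x)]
        exact div_le_self (abs_nonneg _) g1.le
      rw [e1]
      linarith [neg_abs_le (σ * (F' / F x))]
    refine monotoneOn_of_deriv_nonneg (convex_Ioo _ _) ?_ ?_ ?_
    · intro x hx
      obtain ⟨d, -, hd⟩ := hder x hx
      exact hd.continuousAt.continuousWithinAt
    · rw [interior_Ioo]
      intro x hx
      obtain ⟨d, -, hd⟩ := hder x hx
      exact hd.differentiableAt.differentiableWithinAt
    · rw [interior_Ioo]
      intro x hx
      obtain ⟨d, h0, hd⟩ := hder x hx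
      rw [hd.deriv]; exact h0
  refine ⟨A' / γ, by positivity, fun x hx y hy hyx => ?_⟩
  rw [hF1 x hx, hF1 y hy, abs_le]
  have k1 := key 1 (by simp) hy hx hyx
  have k2 := key (-1) (by simp) hy hx hyx
  simp only at k1 k2
  constructor <;> nlinarith

lemma aux_var (g W : ℝ → ℝ) (B c : ℝ) (hB : 0 ≤ B)
    (hgB : ∀ x, |g x| ≤ B) (hg0 : ∀ x, x ∉ Set.Ioc (1/2:ℝ) 1 → g x = 0)
    (hW : ∀ x ∈ Set.Ioo (1/2:ℝ) 1, 0 ≤ W x ∧ W x ≤ c)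
    (hgW : ∀ x ∈ Set.Ioo (1/2:ℝ) 1, ∀ y ∈ Set.Ioo (1/2:ℝ) 1, y ≤ x → |g x - g y| ≤ W x - W y) :
    eVariationOn g Set.univ ≤ ENNReal.ofReal (c + 4 * B) := by
  have hc : 0 ≤ c := by
    have := hW (3/4) (by norm_num); linarith
  set W' : ℝ → ℝ := fun x => if x ≤ 1/2 then 0 else if x < 1 then B + W x else
    if x = 1 then c + 3 * B else c + 4 * B with hW'
  have hr : ∀ x, 0 ≤ W' x ∧ W' x ≤ c + 4 * B := by
    intro x
    simp only [hW']
    split_ifs with h1 h2 h3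
    · constructor <;> linarith
    · have := hW x ⟨not_le.1 h1, h2⟩
      constructor <;> linarith
    · constructor <;> linarith
    · constructor <;> linarith
  have hinc : ∀ x y, y ≤ x → |g x - g y| ≤ W' x - W' y := by
    intro x y hyx
    have hx := hgB x
    have hy := hgB y
    have tri : |g x - g y| ≤ |g x| + |g y| := abs_sub _ _
    have zx : x ≤ 1/2 → g x = 0 := fun h => hg0 x (fun h' => absurd h'.1 (not_lt.2 h))
    have zy : y ≤ 1/2 → g y = 0 := fun h => hg0 y (fun h' => absurd h'.1 (not_lt.2 h))
    have zx' : ¬ x < 1 → ¬ x = 1 → g x = 0 := fun h h1 => hg0 x (fun h' => h1 (le_antisymm h'.2 (not_lt.1 h)))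
    have zy' : ¬ y < 1 → ¬ y = 1 → g y = 0 := fun h h1 => hg0 y (fun h' => h1 (le_antisymm h'.2 (not_lt.1 h)))
    have wx := hW x
    have wy := hW y
    have wxy := hgW x
    have e1 : ∀ x, x ≤ 1/2 → W' x = 0 := fun x h => if_pos h
    have e2 : ∀ x, ¬ x ≤ 1/2 → x < 1 → W' x = B + W x := fun x h h1 => by
      simp only [hW']; rw [if_neg h, if_pos h1]
    have e3 : ∀ x, ¬ x ≤ 1/2 → ¬ x < 1 → x = 1 → W' x = c + 3 * B := fun x h h1 h2 => by
      simp only [hW']; rw [if_neg h, if_neg h1, if_pos h2]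
    have e4 : ∀ x, ¬ x ≤ 1/2 → ¬ x < 1 → ¬ x = 1 → W' x = c + 4 * B := fun x h h1 h2 => by
      simp only [hW']; rw [if_neg h, if_neg h1, if_neg h2]
    by_cases x1 : x ≤ 1/2
    · have y1 : y ≤ 1/2 := hyx.trans x1
      rw [e1 x x1, e1 y y1, zx x1, zy y1]; simp
    · by_cases x2 : x < 1
      · have wx := wx ⟨not_le.1 x1, x2⟩
        rw [e2 x x1 x2]
        by_cases y1 : y ≤ 1/2
        · rw [e1 y y1]
          rw [zy y1, abs_zero] at tri
          rw [zy y1]; linarith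
        · have y2 : y < 1 := by linarith
          have := wxy ⟨not_le.1 x1, x2⟩ y ⟨not_le.1 y1, y2⟩ hyx
          rw [e2 y y1 y2]; linarith
      · by_cases x3 : x = 1
        · by_cases y1 : y ≤ 1/2
          · rw [e3 x x1 x2 x3, e1 y y1]; linarith
          · by_cases y2 : y < 1
            · have wy := wy ⟨not_le.1 y1, y2⟩
              rw [e3 x x1 x2 x3, e2 y y1 y2]; linarith
            · have : y = x := by linarith
              subst this; simp
        · have zx := zx' x2 x3
          rw [zx, abs_zero] at tri
          rw [zx, e4 x x1 x2 x3]
          by_cases y1 : y ≤ 1/2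
          · rw [e1 y y1]; linarith
          · by_cases y2 : y < 1
            · have wy := wy ⟨not_le.1 y1, y2⟩
              rw [e2 y y1 y2]; linarith
            · by_cases y3 : y = 1
              · rw [e3 y y1 y2 y3]; linarith
              · rw [e4 y y1 y2 y3, zy' y2 y3]; simp
  refine iSup_le fun ⟨n, u, hu, _⟩ => ?_
  have : ∀ i ∈ Finset.range n, edist (g (u (i+1))) (g (u i)) ≤
      ENNReal.ofReal (W' (u (i+1)) - W' (u i)) := by
    intro i _
    rw [edist_dist, Real.dist_eq]
    exact ENNReal.ofReal_le_ofReal (hinc _ _ (hu (Nat.le_succ i)))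
  refine (Finset.sum_le_sum this).trans ?_
  rw [← ENNReal.ofReal_sum_of_nonneg, Finset.sum_range_sub (fun i => W' (u i))]
  · apply ENNReal.ofReal_le_ofReal
    linarith [(hr (u n)).2, (hr (u 0)).1]
  · intro i _
    exact (abs_nonneg _).trans (hinc _ _ (hu (Nat.le_succ i)))

lemma aux_psi (φ : ℝ → ℝ) (hφ : eVariationOn φ Set.univ < ⊤) :
    ∃ ψ : ℝ → ℝ, (∀ x, 0 ≤ ψ x ∧ ψ x ≤ (eVariationOn φ Set.univ).toReal) ∧
      ∀ x y, y ≤ x → |φ x - φ y| ≤ ψ x - ψ y := by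
  have hle : ∀ s, eVariationOn φ s ≤ eVariationOn φ Set.univ :=
    fun s => eVariationOn.mono φ (Set.subset_univ s)
  have hne : ∀ s, eVariationOn φ s ≠ ⊤ := fun s => ((hle s).trans_lt hφ).ne
  refine ⟨fun x => (eVariationOn φ (Set.Iic x)).toReal, fun x => ⟨ENNReal.toReal_nonneg,
    ENNReal.toReal_mono hφ.ne (hle _)⟩, fun x y hyx => ?_⟩
  have hu := eVariationOn.union φ (isGreatest_Iic (a := y)) (isLeast_Icc hyx)
  rw [Set.Iic_union_Icc_eq_Iic hyx] at hu
  have he : edist (φ x) (φ y) ≤ eVariationOn φ (Set.Icc y x) :=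
    eVariationOn.edist_le φ (Set.right_mem_Icc.2 hyx) (Set.left_mem_Icc.2 hyx)
  have he2 := ENNReal.toReal_mono (hne _) he
  rw [edist_dist, ENNReal.toReal_ofReal dist_nonneg, Real.dist_eq] at he2
  simp only
  rw [hu, ENNReal.toReal_add (hne _) (hne _)]
  linarith

lemma aux_exp (γ : ℝ) (ρ f : ℝ → ℝ) (hf : IsHolland γ ρ f) (a b : ℝ) (ha : a ∈ Set.Ioo (0:ℝ) (1/2))
    (hb : b ∈ Set.Ioo (0:ℝ) (1/2)) (hab : a < b) : b - a < f b - f a := by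
  have hd : ∀ x ∈ Set.Icc a b, 1 < deriv f x := fun x hx =>
    hf.expanding x ⟨by linarith [ha.1, hx.1], by linarith [hb.2, hx.2]⟩
      (by linarith [hb.2, hx.2] : x < 1/2).ne
  have hdf : ∀ x ∈ Set.Icc a b, DifferentiableAt ℝ f x := fun x hx =>
    differentiableAt_of_deriv_ne_zero (by linarith [hd x hx])
  obtain ⟨c, hc, hc'⟩ := exists_deriv_eq_slope f hab
    (fun x hx => (hdf x hx).continuousAt.continuousWithinAt)
    (fun x hx => (hdf x (Set.Ioo_subset_Icc_self hx)).differentiableWithinAt)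
  have := hd c (Set.Ioo_subset_Icc_self hc)
  rw [hc', lt_div_iff₀ (by linarith)] at this
  linarith

lemma aux_v0 (γ : ℝ) (ρ f : ℝ → ℝ) (hf : IsHolland γ ρ f) (v0 : ℝ → ℝ)
    (hv0 : ∀ x ∈ Set.Ioo (0:ℝ) 1, v0 x ∈ Set.Ioo (0:ℝ) (1/2) ∧ f (v0 x) = x)
    (x y : ℝ) (hx : x ∈ Set.Ioo (0:ℝ) 1) (hy : y ∈ Set.Ioo (0:ℝ) 1) (hyx : y ≤ x) :
    v0 y ≤ v0 x ∧ v0 x - v0 y ≤ x - y := by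
  obtain ⟨hx1, hx2⟩ := hv0 x hx
  obtain ⟨hy1, hy2⟩ := hv0 y hy
  rcases lt_trichotomy (v0 y) (v0 x) with h | h | h
  · have := aux_exp γ ρ f hf _ _ hy1 hx1 h
    rw [hx2, hy2] at this
    exact ⟨h.le, this.le⟩
  · constructor <;> linarith
  · have := aux_exp γ ρ f hf _ _ hx1 hy1 h
    rw [hx2, hy2] at this
    linarith

lemma aux_v0_deriv (γ : ℝ) (ρ f : ℝ → ℝ) (hf : IsHolland γ ρ f) (v0 : ℝ → ℝ)
    (hv0 : ∀ x ∈ Set.Ioo (0:ℝ) 1, v0 x ∈ Set.Ioo (0:ℝ) (1/2) ∧ f (v0 x) = x)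
    (x : ℝ) (hx : x ∈ Set.Ioo (0:ℝ) 1) :
    HasDerivAt v0 (Real.exp (- Real.log (deriv f (v0 x)))) x := by
  obtain ⟨hx1, hx2⟩ := hv0 x hx
  have hd := hf.expanding (v0 x) ⟨hx1.1, by linarith [hx1.2]⟩ hx1.2.ne
  have hdf : HasDerivAt f (deriv f (v0 x)) (v0 x) :=
    (differentiableAt_of_deriv_ne_zero (by linarith)).hasDerivAt
  rw [Real.exp_neg, Real.exp_log (by linarith)]
  have hlip : LipschitzOnWith 1 v0 (Set.Ioo 0 1) := by
    refine LipschitzOnWith.of_dist_le_mul fun a ha b hb => ?_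
    rw [NNReal.coe_one, one_mul, Real.dist_eq, Real.dist_eq]
    rcases le_total a b with h | h
    · have := aux_v0 γ ρ f hf v0 hv0 b a hb ha h
      rw [abs_of_nonpos (by linarith [this.1]), abs_of_nonpos (by linarith)]; linarith [this.2]
    · have := aux_v0 γ ρ f hf v0 hv0 a b ha hb h
      rw [abs_of_nonneg (by linarith [this.1]), abs_of_nonneg (by linarith)]; linarith [this.2]
  have hn := Ioo_mem_nhds hx.1 hx.2
  refine HasDerivAt.of_local_left_inverse (hlip.continuousOn.continuousAt hn) hdf (by linarith) ?_
  filter_upwards [hn] with y hy using (hv0 y hy).2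

lemma aux_iter (γ : ℝ) (ρ f : ℝ → ℝ) (hf : IsHolland γ ρ f) (v0 : ℝ → ℝ)
    (hv0 : ∀ x ∈ Set.Ioo (0:ℝ) 1, v0 x ∈ Set.Ioo (0:ℝ) (1/2) ∧ f (v0 x) = x) (k : ℕ) :
    (∀ x ∈ Set.Ioo (0:ℝ) 1, v0^[k] x ∈ Set.Ioo (0:ℝ) 1) ∧
    (∀ x ∈ Set.Ioo (0:ℝ) 1, ∀ y ∈ Set.Ioo (0:ℝ) 1, y ≤ x →
      v0^[k] y ≤ v0^[k] x ∧ v0^[k] x - v0^[k] y ≤ x - y) ∧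
    (∀ x ∈ Set.Ioo (0:ℝ) 1, HasDerivAt (v0^[k])
      (Real.exp (- ∑ j ∈ Finset.range k, Real.log (deriv f (v0^[j+1] x)))) x) := by
  induction k with
  | zero =>
    refine ⟨fun x hx => hx, fun x hx y hy h => ⟨h, le_rfl⟩, fun x hx => ?_⟩
    simpa using hasDerivAt_id x
  | succ k ih =>
    obtain ⟨i1, i2, i3⟩ := ih
    refine ⟨fun x hx => ?_, fun x hx y hy h => ?_, fun x hx => ?_⟩
    · rw [Function.iterate_succ_apply']
      have := (hv0 _ (i1 x hx)).1
      exact ⟨this.1, by linarith [this.2]⟩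
    · rw [Function.iterate_succ_apply', Function.iterate_succ_apply']
      have h2 := i2 x hx y hy h
      have := aux_v0 γ ρ f hf v0 hv0 _ _ (i1 x hx) (i1 y hy) h2.1
      exact ⟨this.1, this.2.trans h2.2⟩
    · rw [Finset.sum_range_succ, neg_add, Real.exp_add, mul_comm, Function.iterate_succ']
      have := aux_v0_deriv γ ρ f hf v0 hv0 _ (i1 x hx)
      have h2 := HasDerivAt.comp x this (i3 x hx)
      exact h2

lemma aux_T (γ : ℝ) (ρ f : ℝ → ℝ) (hf : IsHolland γ ρ f) (v0 : ℝ → ℝ)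
    (hv0 : ∀ x ∈ Set.Ioo (0:ℝ) 1, v0 x ∈ Set.Ioo (0:ℝ) (1/2) ∧ f (v0 x) = x) (k : ℕ)
    (x y : ℝ) (hx : x ∈ Set.Ioo (0:ℝ) 1) (hy : y ∈ Set.Ioo (0:ℝ) 1) (hyx : y ≤ x)
    (hzy : v0 (1/2) ≤ y) :
    ∑ j ∈ Finset.range k, ((v0^[j+1] x) ^ γ - (v0^[j+1] y) ^ γ) ≤ 2 := by
  have hγ := hf.gamma_pos
  have I := aux_iter γ ρ f hf v0 hv0
  have hle1 : ∀ j, (v0^[j] x) ^ γ ≤ 1 := fun j =>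
    Real.rpow_le_one ((I j).1 x hx).1.le ((I j).1 x hx).2.le hγ.le
  have hge0 : ∀ j, 0 ≤ (v0^[j] x) ^ γ := fun j =>
    Real.rpow_nonneg ((I j).1 x hx).1.le _
  have h2 : v0 (v0 x) ≤ y := by
    have h1 := (hv0 x hx).1
    have := aux_v0 γ ρ f hf v0 hv0 (1/2) (v0 x) (by norm_num) ⟨h1.1, by linarith [h1.2]⟩ h1.2.le
    exact this.1.trans hzy
  have h3 : ∀ j, v0^[j+2] x ≤ v0^[j] y := by
    intro j
    rw [Function.iterate_add_apply]
    exact ((I j).2.1 y hy _ ((I 2).1 x hx) h2).1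
  suffices H : ∑ j ∈ Finset.range k, ((v0^[j+1] x) ^ γ - (v0^[j+1] y) ^ γ) ≤
      2 - (v0^[k+1] x) ^ γ - (v0^[k+2] x) ^ γ by linarith [hge0 (k+1), hge0 (k+2)]
  induction k with
  | zero => simp only [Finset.range_zero, Finset.sum_empty]; linarith [hle1 (0+1), hle1 (0+2)]
  | succ k ih =>
    rw [Finset.sum_range_succ]
    have : (v0^[k+1+2] x) ^ γ ≤ (v0^[k+1] y) ^ γ :=
      Real.rpow_le_rpow ((I _).1 x hx).1.le (h3 (k+1)) hγ.le
    have e : k + 1 + 1 = k + 2 := rfl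
    rw [e]
    linarith

lemma aux_E (γ : ℝ) (ρ f : ℝ → ℝ) (hf : IsHolland γ ρ f) (v0 : ℝ → ℝ)
    (hv0 : ∀ x ∈ Set.Ioo (0:ℝ) 1, v0 x ∈ Set.Ioo (0:ℝ) (1/2) ∧ f (v0 x) = x) :
    ∃ A c : ℝ, 0 ≤ A ∧ 0 < c ∧ ∀ k : ℕ, ∃ T E : ℝ → ℝ,
      (∀ x ∈ Set.Ico (1/2:ℝ) 1, 0 ≤ T x ∧ T x ≤ 2) ∧
      (∀ x ∈ Set.Ioo (1/2:ℝ) 1, HasDerivAt (v0^[k]) (E x) x ∧ 0 < E x ∧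
        E x ≤ c * (v0^[k] (1/2) - v0^[k+1] (1/2))) ∧
      (∀ x ∈ Set.Ioo (1/2:ℝ) 1, ∀ y ∈ Set.Ioo (1/2:ℝ) 1, y ≤ x →
        T y ≤ T x ∧ |E x - E y| ≤ c * (v0^[k] (1/2) - v0^[k+1] (1/2)) * (A * (T x - T y))) := by
  have hγ := hf.gamma_pos
  obtain ⟨A, hA, hlog⟩ := aux_log γ ρ f hf
  have hhalf : (1/2:ℝ) ∈ Set.Ioo (0:ℝ) 1 := by norm_num
  have hz2 := (hv0 _ hhalf).1
  have hz2' : v0 (1/2) ∈ Set.Ioo (0:ℝ) 1 := ⟨hz2.1, by linarith [hz2.2]⟩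
  have hδ : 0 < 1/2 - v0 (1/2) := by linarith [hz2.2]
  refine ⟨A, Real.exp (2*A) / (1/2 - v0 (1/2)), hA, by positivity, fun k => ?_⟩
  have I := aux_iter γ ρ f hf v0 hv0
  set S : ℝ → ℝ := fun x => ∑ j ∈ Finset.range k, (v0^[j+1] x) ^ γ with hS
  set Lg : ℝ → ℝ := fun x => ∑ j ∈ Finset.range k, Real.log (deriv f (v0^[j+1] x)) with hLg
  have hSle : ∀ x ∈ Set.Ioo (0:ℝ) 1, ∀ y ∈ Set.Ioo (0:ℝ) 1, y ≤ x → v0 (1/2) ≤ y →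
      S x - S y ≤ 2 := by
    intro x hx y hy hyx hzy
    have := aux_T γ ρ f hf v0 hv0 k x y hx hy hyx hzy
    rwa [Finset.sum_sub_distrib] at this
  have hSm : ∀ x ∈ Set.Ioo (0:ℝ) 1, ∀ y ∈ Set.Ioo (0:ℝ) 1, y ≤ x → S y ≤ S x := by
    intro x hx y hy hyx
    refine Finset.sum_le_sum fun j _ => ?_
    exact Real.rpow_le_rpow ((I _).1 y hy).1.le ((I (j+1)).2.1 x hx y hy hyx).1 hγ.le
  have hL : ∀ x ∈ Set.Ioo (0:ℝ) 1, ∀ y ∈ Set.Ioo (0:ℝ) 1, y ≤ x →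
      |Lg x - Lg y| ≤ A * (S x - S y) := by
    intro x hx y hy hyx
    simp only [hLg, hS]
    rw [← Finset.sum_sub_distrib, ← Finset.sum_sub_distrib, Finset.mul_sum]
    refine (Finset.abs_sum_le_sum_abs _ _).trans (Finset.sum_le_sum fun j _ => ?_)
    have hm := ((I (j+1)).2.1 x hx y hy hyx).1
    have hh : ∀ x ∈ Set.Ioo (0:ℝ) 1, v0^[j+1] x ∈ Set.Ioo (0:ℝ) (1/2) := by
      intro x hx
      rw [Function.iterate_succ_apply']
      exact (hv0 _ ((I j).1 x hx)).1
    exact hlog _ (hh x hx) _ (hh y hy) hm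
  set E : ℝ → ℝ := fun x => Real.exp (-Lg x) with hE
  have hder : ∀ x ∈ Set.Ioo (0:ℝ) 1, HasDerivAt (v0^[k]) (E x) x := fun x hx => (I k).2.2 x hx
  obtain ⟨ξ, hξ, hξ'⟩ := exists_hasDerivAt_eq_slope (v0^[k]) E hz2.2
    (fun x hx => (hder x ⟨by linarith [hz2.1, hx.1], by linarith [hx.2]⟩).continuousAt.continuousWithinAt)
    (fun x hx => hder x ⟨by linarith [hz2.1, hx.1], by linarith [hx.2]⟩)
  have hξ0 : ξ ∈ Set.Ioo (0:ℝ) 1 := ⟨by linarith [hz2.1, hξ.1], by linarith [hξ.2]⟩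
  rw [← Function.iterate_succ_apply] at hξ'
  have hEb : ∀ x ∈ Set.Ioo (1/2:ℝ) 1, E x ≤
      Real.exp (2*A) / (1/2 - v0 (1/2)) * (v0^[k] (1/2) - v0^[k+1] (1/2)) := by
    intro x hx
    have hx0 : x ∈ Set.Ioo (0:ℝ) 1 := ⟨by linarith [hx.1], hx.2⟩
    have hle : ξ ≤ x := by linarith [hξ.2, hx.1]
    have h1 := hL x hx0 ξ hξ0 hle
    have h2 := hSle x hx0 ξ hξ0 hle hξ.1.le
    have h3 : -Lg x ≤ 2 * A + -Lg ξ := by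
      have := mul_le_mul_of_nonneg_left h2 hA
      linarith [neg_abs_le (Lg x - Lg ξ)]
    have h4 : E x ≤ Real.exp (2*A) * E ξ := by
      simp only [hE]; rw [← Real.exp_add]; exact Real.exp_le_exp.2 h3
    rw [hξ'] at h4
    calc _ ≤ _ := h4
      _ = _ := by ring
  refine ⟨fun x => S x - S (1/2), E, fun x hx => ?_, fun x hx => ?_, fun x hx y hy hyx => ?_⟩
  · have hx0 : x ∈ Set.Ioo (0:ℝ) 1 := ⟨by linarith [hx.1], hx.2⟩
    exact ⟨sub_nonneg.2 (hSm x hx0 _ hhalf hx.1), hSle x hx0 _ hhalf hx.1 hz2.2.le⟩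
  · exact ⟨hder x ⟨by linarith [hx.1], hx.2⟩, Real.exp_pos _, hEb x hx⟩
  · have hx0 : x ∈ Set.Ioo (0:ℝ) 1 := ⟨by linarith [hx.1], hx.2⟩
    have hy0 : y ∈ Set.Ioo (0:ℝ) 1 := ⟨by linarith [hy.1], hy.2⟩
    refine ⟨by linarith [hSm x hx0 y hy0 hyx], ?_⟩
    have h1 := hL x hx0 y hy0 hyx
    have hex : ∀ a b M : ℝ, Real.exp a ≤ M → Real.exp b ≤ M →
        |Real.exp a - Real.exp b| ≤ M * |a - b| := by
      have half : ∀ a b M : ℝ, Real.exp a ≤ M → Real.exp a - Real.exp b ≤ M * |a - b| := by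
        intro a b M ha
        have e : Real.exp b = Real.exp a * Real.exp (b - a) := by rw [← Real.exp_add]; ring_nf
        have e2 := Real.add_one_le_exp (b - a)
        have e3 : Real.exp a - Real.exp b ≤ Real.exp a * (a - b) := by
          rw [e]; nlinarith [Real.exp_pos a]
        refine e3.trans ?_
        calc Real.exp a * (a - b) ≤ Real.exp a * |a - b| :=
              mul_le_mul_of_nonneg_left (le_abs_self _) (Real.exp_pos a).le
          _ ≤ M * |a - b| := mul_le_mul_of_nonneg_right ha (abs_nonneg _)
      intro a b M ha hb
      rw [abs_le]
      constructor
      · have := half b a M hb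
        rw [abs_sub_comm] at this; linarith
      · exact half a b M ha
    have h2 := hex (-Lg x) (-Lg y) _ (hEb x hx) (hEb y hy)
    refine h2.trans ?_
    have h0 : 0 ≤ Real.exp (2*A) / (1/2 - v0 (1/2)) * (v0^[k] (1/2) - v0^[k+1] (1/2)) :=
      (Real.exp_pos _).le.trans (hEb x hx)
    apply mul_le_mul_of_nonneg_left _ h0
    rw [show -Lg x - -Lg y = -(Lg x - Lg y) by ring, abs_neg]
    refine h1.trans (le_of_eq ?_)
    change A * (S x - S y) = A * ((S x - S (1/2)) - (S y - S (1/2)))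
    ring

theorem statement15
    (γ : ℝ) (ρ : ℝ → ℝ) (f : ℝ → ℝ) (hγ0 : 0 < γ) (hγ1 : γ < 1)
    (hf : IsHolland γ ρ f)
    (ν : Measure ℝ) [IsProbabilityMeasure ν]
    (hν_inv : MeasurePreserving f ν ν)
    (h : ℝ → ℝ)
    (hdens : ν = (MeasureTheory.volume.restrict (Set.Icc (0:ℝ) 1)).withDensity
      (fun x => ENNReal.ofReal (h x)))
    (hpos : ∀ x ∈ Set.Ioc (0:ℝ) 1, 0 < h x)
    (hLip : ∀ ε : ℝ, 0 < ε → ∃ L : NNReal, LipschitzOnWith L h (Set.Icc ε 1))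
    (v0 v1 : ℝ → ℝ)
    (hv0 : ∀ x ∈ Set.Ioo (0:ℝ) 1, v0 x ∈ Set.Ioo (0:ℝ) (1/2) ∧ f (v0 x) = x)
    (hv1 : ∀ x ∈ Set.Ioo (0:ℝ) 1, v1 x ∈ Set.Ioo (1/2:ℝ) 1 ∧ f (v1 x) = x)
    (z : ℕ → ℝ) (hz0 : z 0 = 1) (hz1 : z 1 = 1/2)
    (hzrec : ∀ n : ℕ, 1 ≤ n → z (n + 1) = v0 (z n))
    (s : ℝ → ℝ) (hs_pos : ∀ x : ℝ, 0 < s x) (hs : SlowlyVarying s)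
    (hJ : ∃ C₀ : ℝ, 0 < C₀ ∧ ∀ n : ℕ, 1 ≤ n →
      (MeasureTheory.volume (Set.Ioc (z (n + 1)) (z n))).toReal
        ≤ C₀ * (n : ℝ) ^ (-(1/γ) - 1) * s n) :
    ∃ C : ℝ, 0 < C ∧ ∀ n : ℕ, 1 ≤ n → ∀ φ : ℝ → ℝ,
      eVariationOn φ Set.univ < ⊤ → (∀ x : ℝ, x ∉ Set.Icc (0:ℝ) 1 → φ x = 0) →
      eVariationOn (Lop h v0 v1 n φ) Set.univ
        ≤ ENNReal.ofReal (C * (n : ℝ) ^ (-(1/γ) - 1) * s n) * eVariationOn φ Set.univ := by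
  obtain ⟨A, c, hA, hc, hE⟩ := aux_E γ ρ f hf v0 hv0
  obtain ⟨C₀, hC₀, hJ⟩ := hJ
  obtain ⟨L, hL⟩ := hLip (1/2) (by norm_num)
  obtain ⟨xm, hxm, hxm'⟩ := (isCompact_Icc (a := (1/2:ℝ)) (b := 1)).exists_isMinOn
    ⟨1, by norm_num⟩ hL.continuousOn
  obtain ⟨xM, hxM, hxM'⟩ := (isCompact_Icc (a := (1/2:ℝ)) (b := 1)).exists_isMaxOn
    ⟨1, by norm_num⟩ hL.continuousOn
  have hm0 : 0 < h xm := hpos xm ⟨by linarith [hxm.1], hxm.2⟩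
  have hH0 : 0 < h xM := hpos xM ⟨by linarith [hxM.1], hxM.2⟩
  have hm : ∀ x ∈ Set.Icc (1/2:ℝ) 1, h xm ≤ h x := fun x hx => hxm' hx
  have hH : ∀ x ∈ Set.Icc (1/2:ℝ) 1, h x ≤ h xM := fun x hx => hxM' hx
  have hLr : ∀ x ∈ Set.Icc (1/2:ℝ) 1, ∀ y ∈ Set.Icc (1/2:ℝ) 1, |h x - h y| ≤ L * |x - y| := by
    intro x hx y hy
    simpa [Real.dist_eq] using hL.dist_le_mul x hx y hy
  generalize h xm = m at hm0 hm
  generalize h xM = H at hH0 hH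
  have hL0 : (0:ℝ) ≤ L := L.2
  generalize (L:ℝ) = l at hL0 hLr
  obtain ⟨K, hKdef⟩ : ∃ K : ℝ, K = H / m + l / m + H * l / m ^ 2 + H * A / m := ⟨_, rfl⟩
  have hK0 : 0 < K := by rw [hKdef]; positivity
  refine ⟨8 * K * (c * C₀), by positivity, fun n hn φ hφ hφ0 => ?_⟩
  obtain ⟨T, E, hT, hE1, hE2⟩ := hE (n - 1)
  have hz : ∀ k, z (k + 1) = v0^[k] (1/2) := by
    intro k
    induction k with
    | zero => simpa using hz1
    | succ k ih => rw [hzrec (k+1) (by omega), ih, Function.iterate_succ_apply']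
  have hzn : v0^[n-1] (1/2) = z n := by
    rw [← hz]; congr 1; omega
  have hzn1 : v0^[n-1+1] (1/2) = z (n+1) := by
    rw [← hz]; congr 1; omega
  rw [hzn, hzn1] at hE1 hE2
  have hJn := hJ n hn
  rw [Real.volume_Ioc] at hJn
  set Bn : ℝ := (n:ℝ) ^ (-(1/γ) - 1) * s n with hBn
  obtain ⟨M, hM⟩ : ∃ M, M = c * (z n - z (n+1)) := ⟨_, rfl⟩
  rw [← hM] at hE1 hE2
  have hM0 : 0 < M := by
    have := hE1 (3/4) (by norm_num); linarith [this.2.1, this.2.2]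
  have hMle : M ≤ c * (C₀ * Bn) := by
    rw [hM]
    apply mul_le_mul_of_nonneg_left _ hc.le
    have : z n - z (n+1) ≤ (ENNReal.ofReal (z n - z (n+1))).toReal := by
      rw [ENNReal.toReal_ofReal']; exact le_max_left _ _
    rw [hBn, ← mul_assoc]; exact this.trans hJn
  set V : ℝ := (eVariationOn φ Set.univ).toReal with hV
  have hV0 : 0 ≤ V := ENNReal.toReal_nonneg
  obtain ⟨ψ, hψ, hψ2⟩ := aux_psi φ hφ
  have hφV : ∀ x, |φ x| ≤ V := by
    intro x
    have h2 : φ 2 = 0 := hφ0 2 (by norm_num)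
    rcases le_total x 2 with hx | hx
    · have := hψ2 2 x hx
      rw [h2, zero_sub, abs_neg] at this
      linarith [(hψ 2).2, (hψ x).1]
    · have := hψ2 x 2 hx
      rw [h2, sub_zero] at this
      linarith [(hψ x).2, (hψ 2).1]
  have I := aux_iter γ ρ f hf v0 hv0 (n-1)
  set w : ℝ → ℝ := fun y => v1 (v0^[n-1] y) with hw
  have h01 : ∀ x ∈ Set.Ioo (1/2:ℝ) 1, x ∈ Set.Ioo (0:ℝ) 1 := fun x hx =>
    ⟨by linarith [hx.1], hx.2⟩
  have hv1e : ∀ x ∈ Set.Ioo (0:ℝ) 1, v1 x = (x + 1) / 2 := by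
    intro x hx
    obtain ⟨a, b⟩ := hv1 x hx
    rw [hf.eq_right _ ⟨a.1, a.2.le⟩] at b
    linarith
  have hwe : ∀ x ∈ Set.Ioo (1/2:ℝ) 1, w x = (v0^[n-1] x + 1) / 2 := fun x hx =>
    hv1e _ (I.1 x (h01 x hx))
  have hwI : ∀ x ∈ Set.Ioo (1/2:ℝ) 1, w x ∈ Set.Icc (1/2:ℝ) 1 := by
    intro x hx
    have := I.1 x (h01 x hx)
    rw [hwe x hx]
    constructor <;> linarith [this.1, this.2]
  have hwd : ∀ x ∈ Set.Ioo (1/2:ℝ) 1, HasDerivAt w (E x / 2) x := by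
    intro x hx
    have h1 := (((hE1 x hx).1).add_const 1).div_const 2
    refine h1.congr_of_eventuallyEq ?_
    filter_upwards [Ioo_mem_nhds hx.1 hx.2] with y hy using hwe y hy
  have hwm : ∀ x ∈ Set.Ioo (1/2:ℝ) 1, ∀ y ∈ Set.Ioo (1/2:ℝ) 1, y ≤ x →
      w y ≤ w x ∧ w x - w y ≤ x - y := by
    intro x hx y hy hyx
    have := I.2.1 x (h01 x hx) y (h01 y hy) hyx
    rw [hwe x hx, hwe y hy]
    constructor <;> linarith [this.1, this.2]
  have hKV0 : 0 ≤ K * M * V := by positivity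
  -- pointwise weight bounds
  have hQb : ∀ a b e p : ℝ, a ∈ Set.Icc (1/2:ℝ) 1 → b ∈ Set.Icc (1/2:ℝ) 1 → |e| ≤ M → |p| ≤ V →
      |h a * |e| / h b * p| ≤ K * M * V := by
    intro a b e p ha hb he hp
    have h1 := hH a ha
    have h2 := hm b hb
    have h3 := hm a ha
    rw [abs_mul, abs_div, abs_mul, abs_abs, abs_of_pos (by linarith : 0 < h a),
      abs_of_pos (by linarith : 0 < h b)]
    have : h a * |e| / h b ≤ H * M / m := by gcongr
    calc h a * |e| / h b * |p| ≤ (H * M / m) * V := by gcongr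
      _ = (H / m) * M * V := by ring
      _ ≤ K * M * V := by
        gcongr
        rw [hKdef]
        have : 0 ≤ l / m + H * l / m ^ 2 + H * A / m := by positivity
        linarith
  have hdw : ∀ x ∈ Set.Ioo (1/2:ℝ) 1, deriv w x = E x / 2 := fun x hx => (hwd x hx).deriv
  have hdwM : ∀ x ∈ Set.Ioo (1/2:ℝ) 1, |deriv w x| ≤ M := by
    intro x hx
    have := (hE1 x hx).2
    rw [hdw x hx, abs_of_pos (by linarith [this.1])]; linarith [this.1, this.2]
  have hone : DifferentiableAt ℝ w 1 → w 1 ∈ Set.Icc (1/2:ℝ) 1 ∧ |deriv w 1| ≤ M := by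
    intro hd
    have hI : Set.Ioo (1/2:ℝ) 1 ∈ nhdsWithin (1:ℝ) (Set.Iio 1) :=
      Ioo_mem_nhdsLT (by norm_num)
    have hcw : Tendsto w (nhdsWithin (1:ℝ) (Set.Iio 1)) (nhds (w 1)) :=
      hd.continuousAt.tendsto.mono_left nhdsWithin_le_nhds
    refine ⟨isClosed_Icc.mem_of_tendsto hcw (by
      filter_upwards [hI] with x hx using hwI x hx), ?_⟩
    have hlip : ∀ x ∈ Set.Ioo (1/2:ℝ) 1, ∀ y ∈ Set.Ioo (1/2:ℝ) 1, |w x - w y| ≤ M * |x - y| := by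
      intro x hx y hy
      have := (convex_Ioo (1/2:ℝ) 1).norm_image_sub_le_of_norm_deriv_le (f := w) (C := M)
        (fun x hx => (hwd x hx).differentiableAt) (fun x hx => hdwM x hx) hy hx
      simpa using this
    have hlip1 : ∀ y ∈ Set.Ioo (1/2:ℝ) 1, |w y - w 1| ≤ M * |y - 1| := by
      intro y hy
      have t1 : Tendsto (fun x => |w y - w x|) (nhdsWithin (1:ℝ) (Set.Iio 1)) (nhds |w y - w 1|) :=
        (tendsto_const_nhds.sub hcw).abs
      have t2 : Tendsto (fun x => M * |y - x|) (nhdsWithin (1:ℝ) (Set.Iio 1))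
          (nhds (M * |y - 1|)) := by
        have : Continuous (fun x => M * |y - x|) := by fun_prop
        exact this.continuousAt.tendsto.mono_left nhdsWithin_le_nhds
      refine le_of_tendsto_of_tendsto t1 t2 ?_
      filter_upwards [hI] with x hx using hlip y hy x hx
    have hsl : Tendsto (slope w 1) (nhdsWithin (1:ℝ) (Set.Iio 1)) (nhds (deriv w 1)) :=
      hd.hasDerivAt.tendsto_slope.mono_left (nhdsWithin_mono _ (fun x hx => ne_of_lt hx))
    refine le_of_tendsto hsl.abs ?_
    filter_upwards [hI] with x hx
    rw [slope_def_field, abs_div]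
    exact div_le_of_le_mul₀ (abs_nonneg _) hM0.le (hlip1 x hx)
  set q : ℝ → ℝ := fun x => h (w x) * |deriv w x| / h x with hq
  have hLop : ∀ x ∈ Set.Ioc (1/2:ℝ) 1, Lop h v0 v1 n φ x = q x * φ (w x) := fun x hx => by
    rw [Lop, Set.indicator_of_mem hx]
  have hLop0 : ∀ x, x ∉ Set.Ioc (1/2:ℝ) 1 → Lop h v0 v1 n φ x = 0 := fun x hx => by
    rw [Lop, Set.indicator_of_notMem hx]
  have hbd : ∀ x, |Lop h v0 v1 n φ x| ≤ K * M * V := by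
    intro x
    by_cases hx : x ∈ Set.Ioc (1/2:ℝ) 1
    · rw [hLop x hx]
      rcases eq_or_lt_of_le hx.2 with h1 | h1
      · by_cases hd : DifferentiableAt ℝ w 1
        · obtain ⟨o1, o2⟩ := hone hd
          rw [h1]
          exact hQb _ _ _ _ o1 (by norm_num) o2 (hφV _)
        · rw [h1]
          simp only [hq, deriv_zero_of_not_differentiableAt hd]
          simpa using hKV0
      · exact hQb _ _ _ _ (hwI x ⟨hx.1, h1⟩) ⟨hx.1.le, hx.2⟩ (hdwM x ⟨hx.1, h1⟩) (hφV _)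
    · rw [hLop0 x hx]; simpa using hKV0
  have hqb : ∀ x ∈ Set.Ioo (1/2:ℝ) 1, |q x| ≤ K * M := by
    intro x hx
    have h1 := hH _ (hwI x hx)
    have h2 := hm x ⟨hx.1.le, hx.2.le⟩
    have h3 := hm _ (hwI x hx)
    simp only [hq]
    rw [abs_div, abs_mul, abs_abs, abs_of_pos (by linarith : 0 < h (w x)),
      abs_of_pos (by linarith : 0 < h x)]
    calc h (w x) * |deriv w x| / h x ≤ H * M / m := by
          have := hdwM x hx
          gcongr
      _ = (H / m) * M := by ring
      _ ≤ K * M := by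
        gcongr
        rw [hKdef]
        have : 0 ≤ l / m + H * l / m ^ 2 + H * A / m := by positivity
        linarith
  have hqi : ∀ x ∈ Set.Ioo (1/2:ℝ) 1, ∀ y ∈ Set.Ioo (1/2:ℝ) 1, y ≤ x →
      |q x - q y| ≤ K * M * ((x - y) + (T x - T y)) := by
    intro x hx y hy hyx
    have ax := hE1 x hx
    have ay := hE1 y hy
    obtain ⟨tm, ei⟩ := hE2 x hx y hy hyx
    obtain ⟨wm, wi⟩ := hwm x hx y hy hyx
    have hx' : x ∈ Set.Icc (1/2:ℝ) 1 := ⟨hx.1.le, hx.2.le⟩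
    have hy' : y ∈ Set.Icc (1/2:ℝ) 1 := ⟨hy.1.le, hy.2.le⟩
    have b1 := hH _ (hwI x hx)
    have b2 := hH _ (hwI y hy)
    have b3 := hm _ (hwI x hx)
    have b4 := hm _ (hwI y hy)
    have b5 := hm _ hx'
    have b6 := hm _ hy'
    have i1 : |h (w x) - h (w y)| ≤ l * (x - y) := by
      refine (hLr _ (hwI x hx) _ (hwI y hy)).trans ?_
      rw [abs_of_nonneg (by linarith)]
      gcongr
    have i2 : |h y - h x| ≤ l * (x - y) := by
      refine (hLr _ hy' _ hx').trans ?_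
      rw [abs_sub_comm, abs_of_nonneg (by linarith)]
    have hxp : 0 < h x := by linarith
    have hyp : 0 < h y := by linarith
    have hwy : 0 < h (w y) := by linarith
    have i3 : |(h x)⁻¹ - (h y)⁻¹| ≤ l * (x - y) / m ^ 2 := by
      rw [show (h x)⁻¹ - (h y)⁻¹ = (h y - h x) / (h x * h y) by field_simp, abs_div,
        abs_of_pos (by positivity : 0 < h x * h y)]
      have : m ^ 2 ≤ h x * h y := by rw [sq]; gcongr
      have : 0 ≤ l * (x - y) := (abs_nonneg _).trans i2
      gcongr
    have hxi : (h x)⁻¹ ≤ m⁻¹ := by gcongr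
    have hyi : (h y)⁻¹ ≤ m⁻¹ := by gcongr
    have hxi0 : 0 < (h x)⁻¹ := by positivity
    have hd0 : 0 ≤ x - y := by linarith
    have hT0 : 0 ≤ T x - T y := by linarith
    simp only [hq]
    rw [hdw x hx, hdw y hy, abs_of_pos (by linarith [ax.2.1] : 0 < E x / 2),
      abs_of_pos (by linarith [ay.2.1] : 0 < E y / 2)]
    have dec : h (w x) * (E x / 2) / h x - h (w y) * (E y / 2) / h y =
        ((h (w x) - h (w y)) * E x * (h x)⁻¹ + h (w y) * (E x - E y) * (h x)⁻¹
          + h (w y) * E y * ((h x)⁻¹ - (h y)⁻¹)) / 2 := by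
      field_simp; ring
    have p1 : |(h (w x) - h (w y)) * E x * (h x)⁻¹| ≤ l * (x - y) * M * m⁻¹ := by
      rw [abs_mul, abs_mul, abs_of_pos ax.2.1, abs_of_pos hxi0]
      have := ax.2.1
      have := ax.2.2
      gcongr
    have p2 : |h (w y) * (E x - E y) * (h x)⁻¹| ≤ H * (M * (A * (T x - T y))) * m⁻¹ := by
      rw [abs_mul, abs_mul, abs_of_pos hwy, abs_of_pos hxi0]
      gcongr
    have p3 : |h (w y) * E y * ((h x)⁻¹ - (h y)⁻¹)| ≤ H * M * (l * (x - y) / m ^ 2) := by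
      rw [abs_mul, abs_mul, abs_of_pos hwy, abs_of_pos ay.2.1]
      have := ay.2.1
      have := ay.2.2
      gcongr
    have tri := abs_add_three ((h (w x) - h (w y)) * E x * (h x)⁻¹)
      (h (w y) * (E x - E y) * (h x)⁻¹) (h (w y) * E y * ((h x)⁻¹ - (h y)⁻¹))
    rw [dec, abs_div, abs_of_pos (by norm_num : (0:ℝ) < 2)]
    have e : K * M * ((x - y) + (T x - T y)) =
        l * (x - y) * M * m⁻¹ + H * (M * (A * (T x - T y))) * m⁻¹ + H * M * (l * (x - y) / m ^ 2)
        + ((H / m + H * A / m) * M * (x - y) + (H / m + l / m + H * l / m ^ 2) * M * (T x - T y)) := by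
      rw [hKdef]; field_simp; ring
    have e0 : 0 ≤ (H / m + H * A / m) * M * (x - y) +
        (H / m + l / m + H * l / m ^ 2) * M * (T x - T y) := by positivity
    have := abs_nonneg ((h (w x) - h (w y)) * E x * (h x)⁻¹ + h (w y) * (E x - E y) * (h x)⁻¹
          + h (w y) * E y * ((h x)⁻¹ - (h y)⁻¹))
    linarith
  have hfin := aux_var (Lop h v0 v1 n φ)
    (fun x => K * M * ψ (w x) + K * M * V * ((x - 1/2) + T x)) (K * M * V) (4 * (K * M * V)) hKV0
    hbd hLop0 (by
      intro x hx
      have t := hT x ⟨hx.1.le, hx.2⟩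
      have p := hψ (w x)
      have hKM : 0 ≤ K * M := by positivity
      have q1 : K * M * ψ (w x) ≤ K * M * V := mul_le_mul_of_nonneg_left p.2 hKM
      have q2 : K * M * V * ((x - 1/2) + T x) ≤ K * M * V * 3 :=
        mul_le_mul_of_nonneg_left (by linarith [hx.2]) hKV0
      refine ⟨add_nonneg (mul_nonneg hKM p.1)
        (mul_nonneg hKV0 (by linarith [hx.1, t.1])), by linarith⟩) (by
      intro x hx y hy hyx
      rw [hLop x ⟨hx.1, hx.2.le⟩, hLop y ⟨hy.1, hy.2.le⟩]
      have d : q x * φ (w x) - q y * φ (w y) =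
        q x * (φ (w x) - φ (w y)) + (q x - q y) * φ (w y) := by ring
      have r1 : |q x * (φ (w x) - φ (w y))| ≤ K * M * (ψ (w x) - ψ (w y)) := by
        rw [abs_mul]
        exact mul_le_mul (hqb x hx) (hψ2 _ _ (hwm x hx y hy hyx).1) (abs_nonneg _) (by positivity)
      have r2 : |(q x - q y) * φ (w y)| ≤ K * M * ((x - y) + (T x - T y)) * V := by
        rw [abs_mul]
        exact mul_le_mul (hqi x hx y hy hyx) (hφV _) (abs_nonneg _)
          ((abs_nonneg _).trans (hqi x hx y hy hyx))
      rw [d]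
      refine (abs_add_le _ _).trans ((add_le_add r1 r2).trans (le_of_eq ?_))
      ring)
  refine hfin.trans ?_
  have hVe : eVariationOn φ Set.univ = ENNReal.ofReal V := (ENNReal.ofReal_toReal hφ.ne).symm
  rw [hVe, ← ENNReal.ofReal_mul' hV0]
  apply ENNReal.ofReal_le_ofReal
  have : K * M * V ≤ K * (c * (C₀ * Bn)) * V := by gcongr
  calc 4 * (K * M * V) + 4 * (K * M * V) = 8 * (K * M * V) := by ring
    _ ≤ 8 * (K * (c * (C₀ * Bn)) * V) := by linarith
    _ = _ := by rw [hBn]; ring
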